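/- arXiv:1208.2767 — 6 statements merged into one kernel-verified Lean document; each statement's English description precedes it below -/
import Mathlib

section
/- Let F be the global transition function of a k-XOR circulant network of size n with reflected global transition function F̃, let i ∈ ZMod n, let δ_i be the unit configuration at i, and let R_i be the reflection with respect to i. Then for every t ∈ ℕ, F̃^t(δ_i) = R_i(F^t(δ_i)); that is, the space-time diagram of the reflected network started from δ_i is the reflection with respect to i of the space-time diagram of the network started from δ_i. -/
/-! The reflection `R_i` intertwines the two dynamics, `R_i ∘ F = F̃ ∘ R_i`: the change of summation
variable `j ↦ 2i - j` turns the weight `c (j - (2i - a))` into `c (a - j)`. Since `R_i` fixes `δ_i`,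
iterating this semiconjugacy from `δ_i` gives the result. -/

/-- In a `k`-XOR circulant network with global transition function `F` and
reflected global transition function `F̃`, for every automaton `i` and every `t`,
`F̃^t (δ_i) = R_i (F^t (δ_i))`: the space-time diagram of the reflected network started
from the unit configuration `δ_i` is the reflection with respect to `i` of the
space-time diagram of the network started from `δ_i`. -/
theorem xor_circulant_reflected_diagram (n k : ℕ) [NeZero n] (hk : 2 ≤ k) (hkn : k ≤ n)
    (c : ZMod n → ZMod 2) (hc : c (-1) = 1)
    (hck : {j : ZMod n | c j ≠ 0}.ncard = k)
    (F Ft : (ZMod n → ZMod 2) → (ZMod n → ZMod 2))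
    (hF : ∀ (x : ZMod n → ZMod 2) (i : ZMod n), F x i = ∑ j : ZMod n, c (j - i) * x j)
    (hFt : ∀ (x : ZMod n → ZMod 2) (i : ZMod n), Ft x i = ∑ j : ZMod n, c (i - j) * x j)
    (R : ZMod n → (ZMod n → ZMod 2) → (ZMod n → ZMod 2))
    (hR : ∀ (i : ZMod n) (x : ZMod n → ZMod 2) (j : ZMod n), R i x j = x (2 * i - j))
    (δ : ZMod n → ZMod n → ZMod 2)
    (hδ : ∀ i j : ZMod n, δ i j = if j = i then 1 else 0) :
    ∀ (i : ZMod n) (t : ℕ), Ft^[t] (δ i) = R i (F^[t] (δ i)) := by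
  intro i t
  have hsemi : Function.Semiconj (R i) F Ft := by
    intro x
    funext a
    rw [hR, hF, hFt, ← Equiv.sum_comp (Equiv.subLeft (2 * i))]
    refine Finset.sum_congr rfl fun j _ => ?_
    rw [hR, Equiv.subLeft_apply, sub_sub_sub_cancel_left]
  have hfix : R i (δ i) = δ i := by
    funext j
    have hiff : 2 * i - j = i ↔ j = i := by
      constructor <;> intro h <;> linear_combination -h
    simp only [hR, hδ, hiff]
  rw [(hsemi.iterate_right t).eq, hfix]
end

section
/- Let F be the global transition function of a k-XOR circulant network of size n, and let δ_0 be the unit configuration at automaton 0. Suppose t* ∈ ℕ and p* ≥ 1 satisfy F^{t*+p*}(δ_0) = F^{t*}(δ_0). Then for every configuration x, F^{t*+p*}(x) = F^{t*}(x). In particular, the maximum convergence time over all configurations is reached by the configurations of density 1/n (the unit configurations), and the period of the attractor reached by any configuration divides the period p* of the attractors reached by configurations of density 1/n. -/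
/-!
The map `F` is linear and commutes with the translations of `ZMod n`, and every configuration is a
sum of translates of `δ₀`. Hence each iterate is the convolution of `x` with the trajectory of `δ₀`
(`iterate_eq_conv`), so `F^[t] x` depends on `t` only through `F^[t] δ₀`.
-/

/-- Impulse-response formula: `F^[t]` is convolution with the kernel `F^[t] δ₀`. -/
theorem iterate_eq_conv (n : ℕ) [NeZero n] (c : ZMod n → ZMod 2)
    (F : (ZMod n → ZMod 2) → (ZMod n → ZMod 2))
    (hF : ∀ (x : ZMod n → ZMod 2) (i : ZMod n), F x i = ∑ j : ZMod n, c (j - i) * x j)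
    (δ₀ : ZMod n → ZMod 2) (hδ₀ : ∀ j : ZMod n, δ₀ j = if j = 0 then 1 else 0)
    (x : ZMod n → ZMod 2) (t : ℕ) (i : ZMod n) :
    F^[t] x i = ∑ a : ZMod n, F^[t] δ₀ (i - a) * x a := by
  induction t generalizing i with
  | zero => simp [hδ₀, sub_eq_zero]
  | succ t ih =>
    simp only [Function.iterate_succ_apply', hF, ih, Finset.mul_sum, Finset.sum_mul]
    rw [Finset.sum_comm]
    refine Finset.sum_congr rfl fun a _ => ?_
    -- Translation invariance: `c (j - i)` is unchanged when `i` and `j` both shift by `a`.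
    refine Fintype.sum_equiv (Equiv.subRight a) _ _ fun j => ?_
    simp only [Equiv.subRight_apply, sub_sub_sub_cancel_right, mul_assoc]


/-- In a `k`-XOR circulant network with global transition function `F`, if
the trajectory of the unit configuration `δ_0` satisfies `F^(t*+p*) (δ_0) = F^(t*) (δ_0)`
with `p* ≥ 1`, then every configuration `x` satisfies `F^(t*+p*) (x) = F^(t*) (x)`:
the maximum convergence time is reached by configurations of density `1/n` and the
period of the attractor of any configuration divides `p*`. -/
theorem xor_circulant_density_one_extremal (n k : ℕ) [NeZero n] (hk : 2 ≤ k) (hkn : k ≤ n)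
    (c : ZMod n → ZMod 2) (hc : c (-1) = 1)
    (hck : {j : ZMod n | c j ≠ 0}.ncard = k)
    (F : (ZMod n → ZMod 2) → (ZMod n → ZMod 2))
    (hF : ∀ (x : ZMod n → ZMod 2) (i : ZMod n), F x i = ∑ j : ZMod n, c (j - i) * x j)
    (δ₀ : ZMod n → ZMod 2) (hδ₀ : ∀ j : ZMod n, δ₀ j = if j = 0 then 1 else 0)
    (tstar pstar : ℕ) (hp : 1 ≤ pstar)
    (hδconv : F^[tstar + pstar] δ₀ = F^[tstar] δ₀) :
    ∀ x : ZMod n → ZMod 2, F^[tstar + pstar] x = F^[tstar] x := by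
  intro x
  funext i
  simp only [iterate_eq_conv n c F hF δ₀ hδ₀ x, hδconv]
end

section
/- Let p ≥ 1, n = 2^p, and let F : (ZMod n → ZMod 2) → (ZMod n → ZMod 2) be defined by F(x) i = x(i-1) + x(i) (the global transition function of a 2-XOR circulant network of size n with interaction-step 0). Then for every configuration x, F^n(x) is the all-zeros configuration; hence the all-zeros configuration is the only attractor of the network and every configuration converges to it in at most n time steps. -/
/-! Write `S` for the shift `(S x) i = x (i - 1)`, so that `F = S + 1`. In characteristic two,
squaring is additive on commuting operators, hence `F ^ (2 ^ k) = S ^ (2 ^ k) + 1`; this is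
`iterate_two_pow_apply`, by repeated squaring. For `2 ^ k = n` the shift `S ^ n` is the identity,
so `F ^ n = 1 + 1 = 0`. If moreover `F^[q] x = x` with `0 < q`, then `x = F^[n * q] x`, and the
latter vanishes since it is a value of `F^[n]`. -/

/-- The identity `(S + 1) ^ (2 ^ k) = S ^ (2 ^ k) + 1` for the shift `S` in characteristic two. -/
theorem iterate_two_pow_apply {n : ℕ} (F : (ZMod n → ZMod 2) → (ZMod n → ZMod 2))
    (hF : ∀ (x : ZMod n → ZMod 2) (i : ZMod n), F x i = x (i - 1) + x i) (k : ℕ) :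
    ∀ (x : ZMod n → ZMod 2) (i : ZMod n), F^[2 ^ k] x i = x (i - 2 ^ k) + x i := by
  induction k with
  | zero => simpa using hF
  | succ k ih =>
    intro x i
    have hexp : 2 ^ (k + 1) = 2 ^ k + 2 ^ k := by ring
    rw [hexp, Function.iterate_add_apply, ih, ih, ih]
    have hidx : i - 2 ^ k - 2 ^ k = i - 2 ^ (k + 1) := by ring
    rw [hidx]
    -- The two cross terms `x (i - 2 ^ k)` cancel.
    linear_combination CharTwo.add_self_eq_zero (x (i - 2 ^ k))

/-- For a `2`-XOR circulant network of size `n = 2^p` (`p ≥ 1`) with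
interaction-step `0`, whose global transition function is `F x i = x (i-1) + x i`,
every configuration converges to the all-zeros configuration in at most `n` time steps
(`F^n x = 0`); hence the all-zeros configuration is the only attractor (every recurrent
configuration is the all-zeros configuration). -/
theorem two_xor_power_of_two_converges (p : ℕ) (hp : 1 ≤ p) (n : ℕ) (hn : n = 2 ^ p)
    (F : (ZMod n → ZMod 2) → (ZMod n → ZMod 2))
    (hF : ∀ (x : ZMod n → ZMod 2) (i : ZMod n), F x i = x (i - 1) + x i) :
    (∀ x : ZMod n → ZMod 2, F^[n] x = fun _ => 0) ∧
      (∀ x : ZMod n → ZMod 2, (∃ q, 0 < q ∧ F^[q] x = x) → x = fun _ => 0) := by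
  have hzero : ∀ x : ZMod n → ZMod 2, F^[n] x = fun _ => 0 := by
    intro x
    funext i
    have hcast : (2 : ZMod n) ^ p = 0 := by
      have h : ((2 ^ p : ℕ) : ZMod n) = 0 :=
        (ZMod.natCast_eq_zero_iff _ _).2 (dvd_of_eq hn)
      exact_mod_cast h
    have h := iterate_two_pow_apply F hF p x i
    rw [← hn, hcast, sub_zero, CharTwo.add_self_eq_zero] at h
    exact h
  refine ⟨hzero, ?_⟩
  rintro x ⟨q, hq, hx⟩
  have hfix : F^[n * q] x = x := by
    rw [mul_comm, Function.iterate_mul]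
    exact Function.iterate_fixed hx n
  obtain ⟨m, rfl⟩ := Nat.exists_eq_succ_of_ne_zero hq.ne'
  rw [Function.iterate_mul, Function.iterate_succ_apply', hzero] at hfix
  exact hfix.symm
end

section
/- Let p ≥ 1, n' = 2^p, n = 2^{p+1}. Let F : (ZMod n → ZMod 2) → (ZMod n → ZMod 2) and F' : (ZMod n' → ZMod 2) → (ZMod n' → ZMod 2) both be given by the rule y i = x(i-1) + x(i) (2-XOR circulant networks of interaction-step 0 of sizes n and n'). Let x' : ZMod n' → ZMod 2 and let x : ZMod n → ZMod 2 be the repeated configuration x(i) = x'(i mod n') (i.e. x = (x', x')). Then for every t ∈ ℕ and every i ∈ ZMod n, (F^t x)(i) = (F'^t x')(i mod n'); in particular F^t(x) is again a repeated configuration whose halves equal F'^t(x'). -/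
/-- Let `n' = 2^p` and `n = 2^(p+1)`, and let `F`, `F'` be the global
transition functions (rule `y i = x (i-1) + x i`) of the `2`-XOR circulant networks of
interaction-step `0` of sizes `n` and `n'` respectively. If `x` is the repeated
configuration `(x', x')`, i.e. `x i = x' (i mod n')`, then for every time `t` and every
`i`, `(F^t x) i = (F'^t x') (i mod n')`: `F^t x` is again a repeated configuration whose
halves equal `F'^t x'`. -/
theorem two_xor_repeated_configuration (p : ℕ) (hp : 1 ≤ p) (n' n : ℕ)
    (hn' : n' = 2 ^ p) (hn : n = 2 ^ (p + 1))
    (F : (ZMod n → ZMod 2) → (ZMod n → ZMod 2))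
    (hF : ∀ (x : ZMod n → ZMod 2) (i : ZMod n), F x i = x (i - 1) + x i)
    (F' : (ZMod n' → ZMod 2) → (ZMod n' → ZMod 2))
    (hF' : ∀ (x : ZMod n' → ZMod 2) (i : ZMod n'), F' x i = x (i - 1) + x i)
    (x' : ZMod n' → ZMod 2) (x : ZMod n → ZMod 2)
    (hx : ∀ i : ZMod n,
      x i = x' (ZMod.castHom (show n' ∣ n by subst hn hn'; exact pow_dvd_pow 2 p.le_succ)
        (ZMod n') i)) :
    ∀ (t : ℕ) (i : ZMod n),
      F^[t] x i = F'^[t] x'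
        (ZMod.castHom (show n' ∣ n by subst hn hn'; exact pow_dvd_pow 2 p.le_succ)
          (ZMod n') i) := by
  intro t
  induction t with
  | zero => exact hx
  | succ t ih =>
    intro i
    -- Reduction modulo `n'` is a ring homomorphism, so it sends the neighbour `i - 1` of `i`
    -- to the neighbour of its image: the local rule commutes with repetition.
    rw [Function.iterate_succ_apply', Function.iterate_succ_apply', hF, hF', ih, ih,
      map_sub, map_one]
end

section
/- Let p ≥ 1, n = 2^p, and let F : (ZMod n → ZMod 2) → (ZMod n → ZMod 2) be defined by F(x) i = x(i-1) + x(i) (the global transition function of a 2-XOR circulant network of size n with interaction-step 0). If x is a configuration with an odd number of 1s, i.e. Σ_{i ∈ ZMod n} x(i) = 1 in ZMod 2, then x converges to the all-zeros configuration in exactly n time steps: F^n(x) = 0 and F^t(x) ≠ 0 for every t < n. -/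
/-!
Write `F = 1 + S` with `S` the cyclic shift. In characteristic two `F ^ (2 ^ k) = 1 + S ^ (2 ^ k)`,
and hence `F ^ (2 ^ k - 1) = ∑ j < 2 ^ k, S ^ j`. For `n = 2 ^ p` the shift satisfies `S ^ n = 1`,
so `F ^ n = 0`, whereas `F ^ (n - 1) x` has every entry equal to the parity of `x`. If that parity
is `1`, then `F ^ (n - 1) x ≠ 0`; as `0` is a fixed point, no earlier iterate vanishes either.
-/

theorem iterate_two_pow {n : ℕ} {F : (ZMod n → ZMod 2) → (ZMod n → ZMod 2)}
    (hF : ∀ (x : ZMod n → ZMod 2) (i : ZMod n), F x i = x (i - 1) + x i) (k : ℕ) :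
    ∀ (x : ZMod n → ZMod 2) (i : ZMod n),
      F^[2 ^ k] x i = x (i - ((2 ^ k : ℕ) : ZMod n)) + x i := by
  induction k with
  | zero => intro x i; simp [hF]
  | succ k ih =>
    intro x i
    have e : 2 ^ (k + 1) = 2 ^ k + 2 ^ k := by ring
    rw [e, Function.iterate_add_apply, ih, ih, ih, Nat.cast_add, ← sub_sub]
    linear_combination CharTwo.add_self_eq_zero (x (i - ((2 ^ k : ℕ) : ZMod n)))

theorem iterate_two_pow_sub_one {n : ℕ} {F : (ZMod n → ZMod 2) → (ZMod n → ZMod 2)}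
    (hF : ∀ (x : ZMod n → ZMod 2) (i : ZMod n), F x i = x (i - 1) + x i) (k : ℕ) :
    ∀ (x : ZMod n → ZMod 2) (i : ZMod n),
      F^[2 ^ k - 1] x i = ∑ j ∈ Finset.range (2 ^ k), x (i - (j : ZMod n)) := by
  induction k with
  | zero => intro x i; simp
  | succ k ih =>
    intro x i
    have h1 : 1 ≤ 2 ^ k := Nat.one_le_two_pow
    have e : 2 ^ (k + 1) = 2 ^ k + 2 ^ k := by ring
    have e' : 2 ^ (k + 1) - 1 = 2 ^ k + (2 ^ k - 1) := by omega
    rw [e', Function.iterate_add_apply, iterate_two_pow hF, ih, ih, e, Finset.sum_range_add,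
      add_comm]
    simp only [Nat.cast_add, sub_sub]

/-- For a `2`-XOR circulant network of size `n = 2^p` (`p ≥ 1`) with
interaction-step `0` (global transition function `F x i = x (i-1) + x i`), every
configuration with an odd number of `1`s converges to the all-zeros configuration in
exactly `n` time steps: `F^n x = 0` and `F^t x ≠ 0` for every `t < n`. -/
theorem two_xor_odd_density_exact_convergence (p : ℕ) (hp : 1 ≤ p) (n : ℕ)
    (hn : n = 2 ^ p)
    (F : (ZMod n → ZMod 2) → (ZMod n → ZMod 2))
    (hF : ∀ (x : ZMod n → ZMod 2) (i : ZMod n), F x i = x (i - 1) + x i)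
    (x : ZMod n → ZMod 2)
    (hx : ∑ i ∈ Finset.range n, x ((i : ℕ) : ZMod n) = 1) :
    F^[n] x = (fun _ => 0) ∧ ∀ t < n, F^[t] x ≠ fun _ => 0 := by
  constructor
  · funext i
    have h := iterate_two_pow hF p x i
    rw [← hn] at h
    rw [h, ZMod.natCast_self, sub_zero, CharTwo.add_self_eq_zero]
  · intro t ht h0
    -- At `i = -1` the entries `x (i - j)` are those of the given sum in reverse order.
    have h := iterate_two_pow_sub_one hF p x (-1)
    rw [← hn] at h
    have hfix : F (fun _ => 0) = fun _ => 0 := by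
      funext i
      simp [hF]
    have e : n - 1 = (n - 1 - t) + t := by omega
    have hs : ∑ j ∈ Finset.range n, x (-1 - (j : ZMod n)) = 1 := by
      rw [← hx, ← Finset.sum_range_reflect (fun i : ℕ => x (i : ZMod n))]
      refine Finset.sum_congr rfl fun j hj => ?_
      have hj' := Finset.mem_range.mp hj
      have : n - 1 - j = n - (1 + j) := by omega
      rw [this, Nat.cast_sub (by omega), ZMod.natCast_self]
      push_cast
      congr 1
      ring
    rw [hs, e, Function.iterate_add_apply, h0, Function.iterate_fixed hfix] at h
    exact zero_ne_one h
end

section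
/- The Boolean automata network of size 2 with local transition functions f0(a, b) = a XOR b and f1(a, b) = ¬(a XOR b) is synchronism sensitive of level 2. Concretely: the configuration (false, false) is recurrent for the asynchronous transition relation (the three configurations (false,false), (false,true), (true,true) form a terminal strongly connected component of the asynchronous transition graph), but it is not recurrent for the general transition relation, since under the general relation it can reach the stable configuration (true, false), which is a fixed point of both f-updates, from which (false,false) is not reachable. -/
/-!
Asynchronously the moves are `(false, false) ⇄ (false, true) ⇄ (true, true)` together with loops,
so `(true, false)` is never entered from another configuration and `(false, false)` is recurrent.
The simultaneous update of both automata sends `(false, true)` to `(true, false)`, which is fixed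
by every update and therefore cannot be left. Both unreachability facts are instances of
`Relation.ReflTransGen.mem_of_closed`.
-/

/-- Asynchronous transition relation of a Boolean automata network of size 2:
`y` is obtained from `x` by updating exactly one of the two automata. -/
def asyncRel (f0 f1 : Bool × Bool → Bool) (x y : Bool × Bool) : Prop :=
  y = (f0 x, x.2) ∨ y = (x.1, f1 x)

/-- General transition relation of a Boolean automata network of size 2:
`y = F_W x` for some nonempty `W ⊆ {0, 1}`. -/
def genRel (f0 f1 : Bool × Bool → Bool) (x y : Bool × Bool) : Prop :=
  y = (f0 x, x.2) ∨ y = (x.1, f1 x) ∨ y = (f0 x, f1 x)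

/-- A configuration `x` is recurrent for a transition relation `r` if every
configuration reachable from `x` can reach `x` back. -/
def recurrent (r : Bool × Bool → Bool × Bool → Prop) (x : Bool × Bool) : Prop :=
  ∀ y, Relation.ReflTransGen r x y → Relation.ReflTransGen r y x

/-- A property preserved by each step of `r` is preserved along `r`-reachability. -/
theorem Relation.ReflTransGen.mem_of_closed {α : Type*} {r : α → α → Prop} {P : α → Prop}
    {x y : α} (h : Relation.ReflTransGen r x y) (hx : P x)
    (hP : ∀ a b, P a → r a b → P b) : P y := by
  induction h with
  | refl => exact hx
  | tail _ hbc ih => exact hP _ _ ih hbc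

/-- The Boolean automata network of size 2 with `f0 = XOR` and
`f1 = ¬XOR` is synchronism sensitive of level 2: the configuration `(false, false)` is
recurrent for the asynchronous transition relation (the configurations `(false, false)`,
`(false, true)` and `(true, true)` form a terminal strongly connected component of the
asynchronous transition graph), but it is not recurrent for the general transition
relation, since under the general relation it can reach the stable configuration
`(true, false)` — a fixed point of both local updates — from which `(false, false)` is
not reachable. -/
theorem xor_network_level_two_sensitive :
    let f0 : Bool × Bool → Bool := fun q => xor q.1 q.2
    let f1 : Bool × Bool → Bool := fun q => !(xor q.1 q.2)
    recurrent (asyncRel f0 f1) (false, false) ∧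
    Relation.ReflTransGen (asyncRel f0 f1) (false, false) (false, true) ∧
    Relation.ReflTransGen (asyncRel f0 f1) (false, false) (true, true) ∧
    ¬ Relation.ReflTransGen (asyncRel f0 f1) (false, false) (true, false) ∧
    f0 (true, false) = true ∧ f1 (true, false) = false ∧
    Relation.ReflTransGen (genRel f0 f1) (false, false) (true, false) ∧
    ¬ Relation.ReflTransGen (genRel f0 f1) (true, false) (false, false) ∧
    ¬ recurrent (genRel f0 f1) (false, false) := by
  intro f0 f1
  have s1 : asyncRel f0 f1 (false, false) (false, true) := Or.inr rfl
  have s2 : asyncRel f0 f1 (false, true) (true, true) := Or.inl rfl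
  have s3 : asyncRel f0 f1 (true, true) (false, true) := Or.inl rfl
  have s4 : asyncRel f0 f1 (false, true) (false, false) := Or.inr rfl
  have inv : ∀ y, Relation.ReflTransGen (asyncRel f0 f1) (false, false) y → y ≠ (true, false) :=
    fun y hy => hy.mem_of_closed (P := (· ≠ (true, false))) (by decide) (by
      rintro ⟨_ | _, _ | _⟩ b hx (rfl | rfl) <;> revert hx <;> decide)
  have stuck : ∀ y, Relation.ReflTransGen (genRel f0 f1) (true, false) y → y = (true, false) :=
    fun y hy => hy.mem_of_closed (P := (· = (true, false))) rfl (by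
      rintro a b rfl (rfl | rfl | rfl) <;> rfl)
  have escape : Relation.ReflTransGen (genRel f0 f1) (false, false) (true, false) :=
    -- The step leaving the asynchronous component is the simultaneous update at `(false, true)`.
    .head (b := (false, true)) (Or.inr (Or.inl rfl)) (.single (Or.inr (Or.inr rfl)))
  have no_return : ¬ Relation.ReflTransGen (genRel f0 f1) (true, false) (false, false) :=
    fun h => absurd (stuck _ h) (by decide)
  refine ⟨?_, .single s1, .head s1 (.single s2), fun h => inv _ h rfl, rfl, rfl, escape, no_return,
    fun h => no_return (h _ escape)⟩
  rintro ⟨_ | _, _ | _⟩ hy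
  · exact .refl
  · exact .single s4
  · exact absurd rfl (inv _ hy)
  · exact .head s3 (.single s4)
end
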